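/- If r is a root of 2t³ - t² - 3t + 1 with 0 < r < 1, then the sequence b_k of coefficients of the power series expansion of 1/((1-t)(1-3t-t²+2t³)) satisfies: b_k · r^k tends to a positive finite limit as k → ∞; in particular, lim_{k→∞} b_{k+1}/b_k = 1/r. -/

import Mathlib

/-!
Write `s = 1/r` and `a k = b (k - 3)`, so that `a` starts with `0, 0, 0, 1` and satisfies the
recurrence for all `k : ℕ`. The denominator factors as
`(1 - t) (1 - s t) (1 + p t - 2 r t²)` with `p = s - 3`.

* Removing the factor `1 - t`: `a (k+3) - 3 a (k+2) - a (k+1) + 2 a k = 1`. Since the cubic is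
  `(1 - s t) (1 + p t - 2 r t²)`, the sequence `e k = a (k+1) - s a k` satisfies
  `e (k+2) = 1 - p e (k+1) + 2 r e k`. As `0 ≤ p` and `p + 2 r ≤ 4/5`, it follows that `|e k| ≤ 5`.
  Hence consecutive terms of `a k * r ^ k` differ by at most `5 r * r ^ k`, and this sequence
  converges.
* Removing instead `1 - s t`: the combination of `a` with the coefficients of
  `(1 - t) (1 + p t - 2 r t²)` equals `s ^ k` exactly. Multiplying by `r ^ k` and passing to
  the limit gives (limit) × (positive constant) = 1, so the limit is positive.
-/

open Filter

/-- The root of the cubic in `(0, 1)` lies in `[8/25, 1/3]`. -/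
lemma root_bounds (r : ℝ) (hr0 : 0 < r) (hr1 : r < 1)
    (hroot : 2 * r ^ 3 - r ^ 2 - 3 * r + 1 = 0) : 8 / 25 ≤ r ∧ r ≤ 1 / 3 := by
  constructor
  · by_contra! h
    nlinarith [mul_pos hr0 hr0, mul_pos (mul_pos hr0 hr0) hr0]
  · by_contra! h
    nlinarith [mul_pos hr0 (sub_pos.2 hr1), mul_pos (mul_pos hr0 hr0) (sub_pos.2 hr1)]

/-- The asymptotics for the shifted sequence, with `s` playing the role of `1 / r`. -/
lemma shifted_limit (r s : ℝ) (hr0 : 0 < r) (hr1 : r < 1)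
    (hroot : 2 * r ^ 3 - r ^ 2 - 3 * r + 1 = 0) (hrs : r * s = 1)
    (a : ℕ → ℝ) (a0 : a 0 = 0) (a1 : a 1 = 0) (a2 : a 2 = 0) (a3 : a 3 = 1)
    (ha : ∀ k, a (k + 4) = 4 * a (k + 3) - 2 * a (k + 2) - 3 * a (k + 1) + 2 * a k) :
    ∃ L : ℝ, 0 < L ∧ Tendsto (fun k => a k * r ^ k) atTop (nhds L) := by
  obtain ⟨hlo, hhi⟩ := root_bounds r hr0 hr1 hroot
  have hs3 : 3 ≤ s := by nlinarith
  have hq : s ^ 2 - 3 * s - 1 = -2 * r := by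
    linear_combination s ^ 2 * hroot - (2 * r ^ 2 * s + 2 * r - r * s - 1 - 3 * s) * hrs
  have hp : (s - 3) + 2 * r ≤ 4 / 5 := by
    have : r * ((s - 3) + 2 * r - 4 / 5) ≤ 0 := by nlinarith
    nlinarith
  have h1 : ∀ k, a (k + 3) - 3 * a (k + 2) - a (k + 1) + 2 * a k = 1 := by
    intro k
    induction k with
    | zero => simp [a0, a1, a2, a3]
    | succ k ih =>
      have := ha k
      simp only [add_assoc, Nat.reduceAdd] at *
      linarith
  have he : ∀ k, |a (k + 1) - s * a k| ≤ 5 ∧ |a (k + 2) - s * a (k + 1)| ≤ 5 := by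
    intro k
    induction k with
    | zero => simp [a0, a1, a2]
    | succ k ih =>
      obtain ⟨i1, i2⟩ := ih
      refine ⟨i2, ?_⟩
      have e : a (k + 3) - s * a (k + 2) = 1 - (s - 3) * (a (k + 2) - s * a (k + 1))
          + 2 * r * (a (k + 1) - s * a k) := by
        linear_combination h1 k - a (k + 1) * hq + 2 * a k * hrs
      change |a (k + 3) - s * a (k + 2)| ≤ 5
      rw [e]
      rw [abs_le] at *
      constructor <;> nlinarith
  have hF : ∀ k, a (k + 3) + (s - 4) * a (k + 2) + (-2 * r - (s - 3)) * a (k + 1)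
      + 2 * r * a k = s ^ k := by
    intro k
    induction k with
    | zero => simp [a0, a1, a2, a3]
    | succ k ih =>
      have := ha k
      rw [pow_succ, ← ih]
      simp only [add_assoc, Nat.reduceAdd] at *
      linear_combination this - a (k + 2) * hq + a (k + 1) * hq - 2 * (a k - a (k + 1)) * hrs
  obtain ⟨L, hL⟩ : ∃ L, Tendsto (fun k => a k * r ^ k) atTop (nhds L) := by
    apply cauchySeq_tendsto_of_complete
    refine cauchySeq_of_le_geometric r (5 * r) hr1 fun k => ?_
    have e : a (k + 1) * r ^ (k + 1) - a k * r ^ k = (a (k + 1) - s * a k) * (r * r ^ k) := by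
      linear_combination a k * r ^ k * hrs
    rw [dist_comm, Real.dist_eq, e, abs_mul, abs_of_pos (by positivity : 0 < r * r ^ k), mul_assoc]
    exact mul_le_mul_of_nonneg_right (he k).1 (by positivity)
  refine ⟨L, ?_, hL⟩
  have hS := fun i : ℕ => hL.comp (tendsto_add_atTop_nat i)
  have hlim := ((((hS 3).const_mul (s ^ 3)).add ((hS 2).const_mul ((s - 4) * s ^ 2))).add
    ((hS 1).const_mul ((-2 * r - (s - 3)) * s))).add (hL.const_mul (2 * r))
  have hone : s ^ 3 * L + (s - 4) * s ^ 2 * L + (-2 * r - (s - 3)) * s * L + 2 * r * L = 1 := by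
    refine tendsto_nhds_unique hlim (tendsto_const_nhds.congr fun k => ?_)
    have hk : r ^ k * s ^ k = 1 := by rw [← mul_pow, hrs, one_pow]
    have hr2 : r ^ 2 * s ^ 2 = 1 := by rw [← mul_pow, hrs, one_pow]
    have hr3 : r ^ 3 * s ^ 3 = 1 := by rw [← mul_pow, hrs, one_pow]
    simp only [Function.comp]
    linear_combination -hk - r ^ k * hF k - a (k + 3) * r ^ k * hr3
      - (s - 4) * a (k + 2) * r ^ k * hr2 - (-2 * r - (s - 3)) * a (k + 1) * r ^ k * hrs
  have hc : 0 < s ^ 3 + (s - 4) * s ^ 2 + (-2 * r - (s - 3)) * s + 2 * r := by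
    nlinarith [mul_nonneg (sq_nonneg s) (sub_nonneg.2 hs3)]
  by_contra! hneg
  nlinarith [mul_nonneg hc.le (neg_nonneg.2 hneg)]

theorem stmt_11 (r : ℝ) (hr0 : 0 < r) (hr1 : r < 1)
    (hroot : 2 * r ^ 3 - r ^ 2 - 3 * r + 1 = 0)
    (b : ℤ → ℤ) (hneg : ∀ j : ℤ, j < 0 → b j = 0) (h0 : b 0 = 1)
    (hrec : ∀ k : ℤ, 1 ≤ k →
      b k = 4 * b (k - 1) - 2 * b (k - 2) - 3 * b (k - 3) + 2 * b (k - 4)) :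
    (∃ L : ℝ, 0 < L ∧
      Tendsto (fun k : ℕ => (b (k : ℤ) : ℝ) * r ^ k) atTop (nhds L)) ∧
    Tendsto (fun k : ℕ => ((b ((k : ℤ) + 1) : ℝ) / (b (k : ℤ) : ℝ)))
      atTop (nhds (1 / r)) := by
  have hr : r ≠ 0 := hr0.ne'
  obtain ⟨M, hM, hlim⟩ := shifted_limit r (1 / r) hr0 hr1 hroot (by field_simp)
    (fun k => (b ((k : ℤ) - 3) : ℝ)) (by simp [hneg]) (by simp [hneg]) (by simp [hneg])
    (by simp [h0]) (by
      intro k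
      have := hrec ((k : ℤ) + 1) (by omega)
      have e1 : ((k + 4 : ℕ) : ℤ) - 3 = k + 1 := by push_cast; ring
      have e2 : ((k + 3 : ℕ) : ℤ) - 3 = k + 1 - 1 := by push_cast; ring
      have e3 : ((k + 2 : ℕ) : ℤ) - 3 = k + 1 - 2 := by push_cast; ring
      have e4 : ((k + 1 : ℕ) : ℤ) - 3 = k + 1 - 3 := by push_cast; ring
      have e5 : (k : ℤ) - 3 = k + 1 - 4 := by ring
      simp only [e1, e2, e3, e4]
      rw [e5]
      exact_mod_cast this)
  have hb : Tendsto (fun k : ℕ => (b (k : ℤ) : ℝ) * r ^ k) atTop (nhds (M / r ^ 3)) := by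
    refine ((hlim.comp (tendsto_add_atTop_nat 3)).div_const (r ^ 3)).congr fun k => ?_
    simp only [Function.comp, Nat.cast_add, Nat.cast_ofNat, add_sub_cancel_right, pow_add]
    field_simp
  have hL : 0 < M / r ^ 3 := by positivity
  refine ⟨⟨_, hL, hb⟩, ?_⟩
  have h := ((hb.comp (tendsto_add_atTop_nat 1)).div hb hL.ne').div_const r
  rw [div_self hL.ne'] at h
  refine h.congr fun k => ?_
  simp only [Function.comp, Pi.div_apply, Nat.cast_add, Nat.cast_one, pow_succ]
  rw [← mul_assoc, mul_right_comm, mul_div_mul_right _ _ (pow_ne_zero k hr)]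
  field_simp
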